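/- arXiv:2108.09005 — 2 statements merged into one kernel-verified Lean document; each statement's English description precedes it below -/
import Mathlib

section
/- For every (r, g) ∈ ℝ × (0, ∞), the value 𝓔(r, g) lies in the half-open interval (0, 1/2], i.e. 0 < 𝓔(r, g) ≤ 1/2; moreover if g ≠ 1 then 𝓔(r, g) < 1/2. -/
/-!
Let `φ` be the standard normal density, let `0 < g ≠ 1`, and let `P` and `Q` be the laws `N(0, 1)`
and `N(r / g, 1 / g ^ 2)`, with densities `φ y` and `g * φ (g * y - r)`. The logarithm of the ratio
of the densities is quadratic in `y`, with roots `c` and `d`, and `𝓔(r, g)` is the error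
`(1 - TV(P, Q)) / 2` of the best test between `P` and `Q`. Exchanging `P` and `Q` amounts to
replacing `(r, g)` by `(-r / g, 1 / g)`, so one may assume `1 < g`. Then `c < d`, the density of `Q`
exceeds that of `P` exactly on `(c, d)`, and `TV(P, Q) = Q (c, d) - P (c, d)` lies strictly between
`0` and `1`.
-/

open MeasureTheory ProbabilityTheory Matrix Filter Set

noncomputable def Phi (t : ℝ) : ℝ := ((gaussianReal 0 1) (Set.Iic t)).toReal
noncomputable def calE (r g : ℝ) : ℝ :=
  if g = 1 then Phi (-(|r| / 2))
  else
    1/2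
      + (1/2) * Phi ((r - g * Real.sqrt (r^2 + (g^2 - 1) * Real.log (g^2))) / (g^2 - 1))
      - (1/2) * Phi ((r + g * Real.sqrt (r^2 + (g^2 - 1) * Real.log (g^2))) / (g^2 - 1))
      + (1/2) * Phi ((r * g + Real.sqrt (r^2 + (g^2 - 1) * Real.log (g^2))) / (g^2 - 1))
      - (1/2) * Phi ((r * g - Real.sqrt (r^2 + (g^2 - 1) * Real.log (g^2))) / (g^2 - 1))

section Cdf

variable (μ : Measure ℝ) [IsProbabilityMeasure μ]

lemma strictMono_cdf [μ.IsOpenPosMeasure] : StrictMono (cdf μ) := by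
  intro a b hab
  have hIoc : 0 < μ (Ioc a b) :=
    (isOpen_Ioo.measure_pos μ (nonempty_Ioo.2 hab)).trans_le (measure_mono Ioo_subset_Ioc_self)
  rwa [← measure_cdf μ, StieltjesFunction.measure_Ioc, ENNReal.ofReal_pos, sub_pos] at hIoc

lemma cdf_pos [μ.IsOpenPosMeasure] (t : ℝ) : 0 < cdf μ t :=
  (cdf_nonneg μ (t - 1)).trans_lt (strictMono_cdf μ (sub_one_lt t))

lemma cdf_lt_one [μ.IsOpenPosMeasure] (t : ℝ) : cdf μ t < 1 :=
  (strictMono_cdf μ (lt_add_one t)).trans_le (cdf_le_one μ (t + 1))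

lemma cdf_zero_of_isNegInvariant [NullSingletonClass μ] [μ.IsNegInvariant] :
    cdf μ 0 = 1 / 2 := by
  have hreflect : μ.real (Ioi 0) = μ.real (Iic 0) := by
    rw [measureReal_congr Ioi_ae_eq_Ici, measureReal_def, ← Measure.measure_neg, neg_Ici, neg_zero,
      measureReal_def]
  have htotal := probReal_compl_eq_one_sub (μ := μ) (measurableSet_Iic (a := (0 : ℝ)))
  rw [compl_Iic, hreflect] at htotal
  rw [cdf_eq_real]
  linarith

end Cdf

section Gaussian

lemma continuous_gaussianPDFReal (m : ℝ) (v : NNReal) : Continuous (gaussianPDFReal m v) := by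
  rw [gaussianPDFReal_def]
  fun_prop

lemma isOpenPosMeasure_gaussianReal (m : ℝ) {v : NNReal} (hv : v ≠ 0) :
    (gaussianReal m v).IsOpenPosMeasure :=
  (gaussianReal_absolutelyContinuous' m hv).isOpenPosMeasure

lemma isNegInvariant_gaussianReal_zero (v : NNReal) : (gaussianReal 0 v).IsNegInvariant :=
  ⟨gaussianReal_map_neg.trans (by rw [neg_zero])⟩

lemma hasDerivAt_cdf_gaussianReal (m : ℝ) {v : NNReal} (hv : v ≠ 0) (t : ℝ) :
    HasDerivAt (cdf (gaussianReal m v)) (gaussianPDFReal m v t) t := by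
  have hint := integrable_gaussianPDFReal m v
  have hcdf : ∀ s, cdf (gaussianReal m v) s = ∫ x in Iic s, gaussianPDFReal m v x := fun s => by
    rw [cdf_eq_real, measureReal_def, gaussianReal_apply_eq_integral m hv,
      ENNReal.toReal_ofReal (integral_nonneg (gaussianPDFReal_nonneg m v))]
  have hprimitive : ∀ s, cdf (gaussianReal m v) s
      = cdf (gaussianReal m v) t + ∫ x in t..s, gaussianPDFReal m v x := fun s => by
    rw [hcdf, hcdf, ← intervalIntegral.integral_Iic_sub_Iic hint.integrableOn hint.integrableOn,
      add_sub_cancel]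
  rw [funext hprimitive]
  exact ((continuous_gaussianPDFReal m v).integral_hasStrictDerivAt t t).hasDerivAt.const_add _

lemma gaussianPDFReal_lt_mul_gaussianPDFReal_iff {g : ℝ} (hg : 0 < g) (r y : ℝ) :
    gaussianPDFReal 0 1 y < g * gaussianPDFReal 0 1 (g * y - r) ↔
      (g * y - r) ^ 2 - y ^ 2 < Real.log (g ^ 2) := by
  have hpdf : ∀ x, gaussianPDFReal 0 1 x = (√(2 * Real.pi))⁻¹ * Real.exp (-x ^ 2 / 2) := by
    simp [gaussianPDFReal]
  have hscaled : g * gaussianPDFReal 0 1 (g * y - r)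
      = (√(2 * Real.pi))⁻¹ * Real.exp (-(g * y - r) ^ 2 / 2 + Real.log g) := by
    rw [hpdf, Real.exp_add, Real.exp_log hg]
    ring
  rw [hscaled, hpdf, mul_lt_mul_iff_right₀ (by positivity), Real.exp_lt_exp, Real.log_pow]
  constructor <;> intro h <;> push_cast at * <;> linarith

end Gaussian

section StandardNormal

lemma Phi_eq_cdf : Phi = cdf (gaussianReal 0 1) :=
  funext fun t => (cdf_eq_real _ t).symm

lemma strictMono_Phi : StrictMono Phi := by
  have := isOpenPosMeasure_gaussianReal 0 one_ne_zero
  exact Phi_eq_cdf ▸ strictMono_cdf _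

lemma Phi_pos (t : ℝ) : 0 < Phi t := by
  have := isOpenPosMeasure_gaussianReal 0 one_ne_zero
  exact Phi_eq_cdf ▸ cdf_pos _ t

lemma Phi_lt_one (t : ℝ) : Phi t < 1 := by
  have := isOpenPosMeasure_gaussianReal 0 one_ne_zero
  exact Phi_eq_cdf ▸ cdf_lt_one _ t

lemma Phi_zero : Phi 0 = 1 / 2 := by
  have : NullSingletonClass (gaussianReal 0 1) := nullSingletonClass_gaussianReal one_ne_zero
  have := isNegInvariant_gaussianReal_zero 1
  exact Phi_eq_cdf ▸ cdf_zero_of_isNegInvariant _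

lemma hasDerivAt_Phi (t : ℝ) : HasDerivAt Phi (gaussianPDFReal 0 1 t) t :=
  Phi_eq_cdf ▸ hasDerivAt_cdf_gaussianReal 0 one_ne_zero t

lemma hasDerivAt_Phi_affine (r g y : ℝ) :
    HasDerivAt (fun y => Phi (g * y - r)) (g * gaussianPDFReal 0 1 (g * y - r)) y := by
  have haffine : HasDerivAt (fun y => g * y - r) g y := by
    simpa using ((hasDerivAt_id y).const_mul g).sub_const r
  simpa only [mul_comm g] using! (hasDerivAt_Phi (g * y - r)).comp y haffine

end StandardNormal

lemma sub_lt_sub_of_hasDerivAt_lt {f h f' h' : ℝ → ℝ} {a b : ℝ} (hab : a < b)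
    (hf : ContinuousOn f (Icc a b)) (hh : ContinuousOn h (Icc a b))
    (hf' : ∀ x ∈ Ioo a b, HasDerivAt f (f' x) x) (hh' : ∀ x ∈ Ioo a b, HasDerivAt h (h' x) x)
    (hlt : ∀ x ∈ Ioo a b, f' x < h' x) : f b - f a < h b - h a := by
  have hmono : StrictMonoOn (fun x => h x - f x) (Icc a b) := by
    refine strictMonoOn_of_hasDerivWithinAt_pos (f' := fun x => h' x - f' x) (convex_Icc a b)
      (hh.sub hf) ?_ ?_ <;> rw [interior_Icc]
    · exact fun x hx => ((hh' x hx).sub (hf' x hx)).hasDerivWithinAt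
    · exact fun x hx => sub_pos.2 (hlt x hx)
  have hends := hmono (left_mem_Icc.2 hab.le) (right_mem_Icc.2 hab.le) hab
  linarith

section Crossings

/-- The quantity `Δ(r, g) = r² + (g² - 1) log g²` whose square root enters `calE`. It is the reduced
discriminant of the quadratic polynomial `(g * y - r) ^ 2 - y ^ 2 - log (g ^ 2)` in `y`. -/
noncomputable def calDelta (r g : ℝ) : ℝ := r ^ 2 + (g ^ 2 - 1) * Real.log (g ^ 2)

/-- The crossing point, with the minus sign before the square root, of the densities of `N(0, 1)`
and `N(r / g, 1 / g ^ 2)`. It is the left one of the two when `1 < g`. -/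
noncomputable def lowerCrossing (r g : ℝ) : ℝ := (r * g - √(calDelta r g)) / (g ^ 2 - 1)

/-- The crossing point, with the plus sign before the square root, of the densities of `N(0, 1)`
and `N(r / g, 1 / g ^ 2)`. It is the right one of the two when `1 < g`. -/
noncomputable def upperCrossing (r g : ℝ) : ℝ := (r * g + √(calDelta r g)) / (g ^ 2 - 1)

lemma calDelta_pos {g : ℝ} (hg : 1 < g) (r : ℝ) : 0 < calDelta r g := by
  have hsq : 1 < g ^ 2 := one_lt_pow₀ hg two_ne_zero
  have hprod : 0 < (g ^ 2 - 1) * Real.log (g ^ 2) := mul_pos (sub_pos.2 hsq) (Real.log_pos hsq)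
  exact add_pos_of_nonneg_of_pos (sq_nonneg r) hprod

lemma calDelta_neg_div_inv {g : ℝ} (hg : g ≠ 0) (r : ℝ) :
    calDelta (-(r / g)) g⁻¹ = calDelta r g / g ^ 2 := by
  rw [calDelta, calDelta, inv_pow, Real.log_inv]
  field_simp
  ring

lemma lowerCrossing_lt_upperCrossing {g : ℝ} (hg : 1 < g) (r : ℝ) :
    lowerCrossing r g < upperCrossing r g := by
  have hsq : 0 < g ^ 2 - 1 := sub_pos.2 (one_lt_pow₀ hg two_ne_zero)
  have hsqrt : 0 < √(calDelta r g) := Real.sqrt_pos.2 (calDelta_pos hg r)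
  exact div_lt_div_of_pos_right (by linarith) hsq

lemma sq_sub_sq_sub_log_eq {r g : ℝ} (hg : g ^ 2 ≠ 1) (hΔ : 0 ≤ calDelta r g) (y : ℝ) :
    (g * y - r) ^ 2 - y ^ 2 - Real.log (g ^ 2)
      = (g ^ 2 - 1) * ((y - lowerCrossing r g) * (y - upperCrossing r g)) := by
  have hk : g ^ 2 - 1 ≠ 0 := sub_ne_zero.2 hg
  have hsqrt : √(calDelta r g) ^ 2 = r ^ 2 + (g ^ 2 - 1) * Real.log (g ^ 2) := Real.sq_sqrt hΔ
  rw [lowerCrossing, upperCrossing]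
  field_simp
  linear_combination hsqrt

-- The map `y ↦ g * y - r` carries `N(r / g, 1 / g ^ 2)` to `N(0, 1)` and `N(0, 1)` to
-- `N(-r, g ^ 2)`, hence crossings to crossings; lower and upper trade places because `g ^ 2 - 1`
-- changes sign.
lemma lowerCrossing_neg_div_inv {g : ℝ} (hg : 0 < g) (hg1 : g ^ 2 ≠ 1) (r : ℝ) :
    lowerCrossing (-(r / g)) g⁻¹ = g * upperCrossing r g - r := by
  have hk : g ^ 2 - 1 ≠ 0 := sub_ne_zero.2 hg1
  rw [lowerCrossing, upperCrossing, calDelta_neg_div_inv hg.ne', Real.sqrt_div' _ (sq_nonneg g),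
    Real.sqrt_sq hg.le]
  field_simp
  ring

lemma upperCrossing_neg_div_inv {g : ℝ} (hg : 0 < g) (hg1 : g ^ 2 ≠ 1) (r : ℝ) :
    upperCrossing (-(r / g)) g⁻¹ = g * lowerCrossing r g - r := by
  have hk : g ^ 2 - 1 ≠ 0 := sub_ne_zero.2 hg1
  rw [lowerCrossing, upperCrossing, calDelta_neg_div_inv hg.ne', Real.sqrt_div' _ (sq_nonneg g),
    Real.sqrt_sq hg.le]
  field_simp
  ring

lemma gaussianPDFReal_lt_of_mem_Ioo_crossing {r g y : ℝ} (hg : 1 < g)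
    (hy : y ∈ Ioo (lowerCrossing r g) (upperCrossing r g)) :
    gaussianPDFReal 0 1 y < g * gaussianPDFReal 0 1 (g * y - r) := by
  have hsq : 1 < g ^ 2 := one_lt_pow₀ hg two_ne_zero
  rw [gaussianPDFReal_lt_mul_gaussianPDFReal_iff (by linarith), ← sub_neg,
    sq_sub_sq_sub_log_eq hsq.ne' (calDelta_pos hg r).le]
  exact mul_neg_of_pos_of_neg (sub_pos.2 hsq)
    (mul_neg_of_pos_of_neg (sub_pos.2 hy.1) (sub_neg.2 hy.2))

lemma Phi_sub_lt_Phi_affine_sub {g : ℝ} (hg : 1 < g) (r : ℝ) :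
    Phi (upperCrossing r g) - Phi (lowerCrossing r g)
      < Phi (g * upperCrossing r g - r) - Phi (g * lowerCrossing r g - r) :=
  sub_lt_sub_of_hasDerivAt_lt (h := fun y => Phi (g * y - r)) (lowerCrossing_lt_upperCrossing hg r)
    (fun y _ => (hasDerivAt_Phi y).continuousAt.continuousWithinAt)
    (fun y _ => (hasDerivAt_Phi_affine r g y).continuousAt.continuousWithinAt)
    (fun y _ => hasDerivAt_Phi y) (fun y _ => hasDerivAt_Phi_affine r g y)
    (fun _ hy => gaussianPDFReal_lt_of_mem_Ioo_crossing hg hy)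

end Crossings

section BayesError

lemma calE_one (r : ℝ) : calE r 1 = Phi (-(|r| / 2)) :=
  if_pos rfl

lemma calE_one_mem_Ioc (r : ℝ) : calE r 1 ∈ Ioc 0 (1 / 2) := by
  rw [calE_one, ← Phi_zero]
  exact ⟨Phi_pos _, strictMono_Phi.monotone (neg_nonpos.2 (by positivity))⟩

lemma calE_eq_of_sq_ne_one {g : ℝ} (hg : g ^ 2 ≠ 1) (r : ℝ) :
    calE r g = (1 - ((Phi (g * upperCrossing r g - r) - Phi (g * lowerCrossing r g - r))
      - (Phi (upperCrossing r g) - Phi (lowerCrossing r g)))) / 2 := by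
  have hg1 : g ≠ 1 := by
    rintro rfl
    exact hg (one_pow 2)
  have hk : g ^ 2 - 1 ≠ 0 := sub_ne_zero.2 hg
  have hlower : g * lowerCrossing r g - r = (r - g * √(calDelta r g)) / (g ^ 2 - 1) := by
    rw [lowerCrossing]
    field_simp
    ring
  have hupper : g * upperCrossing r g - r = (r + g * √(calDelta r g)) / (g ^ 2 - 1) := by
    rw [upperCrossing]
    field_simp
    ring
  rw [hlower, hupper, lowerCrossing, upperCrossing, calE, if_neg hg1, calDelta]
  ring

lemma calE_neg_div_inv {g : ℝ} (hg : 0 < g) (r : ℝ) : calE (-(r / g)) g⁻¹ = calE r g := by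
  rcases eq_or_ne g 1 with rfl | hg1
  · rw [inv_one, div_one, calE_one, calE_one, abs_neg]
  have hsq : g ^ 2 ≠ 1 := mt (pow_eq_one_iff_of_nonneg hg.le two_ne_zero).1 hg1
  have hsq_inv : g⁻¹ ^ 2 ≠ 1 := by rwa [inv_pow, ne_eq, inv_eq_one]
  have hback : ∀ y, g⁻¹ * (g * y - r) - -(r / g) = y := fun y => by
    field_simp
    ring
  rw [calE_eq_of_sq_ne_one hsq, calE_eq_of_sq_ne_one hsq_inv, lowerCrossing_neg_div_inv hg hsq,
    upperCrossing_neg_div_inv hg hsq, hback, hback]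
  ring

lemma calE_mem_Ioo_of_one_lt {g : ℝ} (hg : 1 < g) (r : ℝ) : calE r g ∈ Ioo 0 (1 / 2) := by
  rw [calE_eq_of_sq_ne_one (one_lt_pow₀ hg two_ne_zero).ne']
  have hlt := Phi_sub_lt_Phi_affine_sub hg r
  have hmono := strictMono_Phi (lowerCrossing_lt_upperCrossing hg r)
  have hupper := Phi_lt_one (g * upperCrossing r g - r)
  have hlower := Phi_pos (g * lowerCrossing r g - r)
  constructor <;> linarith

lemma calE_mem_Ioo {g : ℝ} (hg : 0 < g) (hg1 : g ≠ 1) (r : ℝ) : calE r g ∈ Ioo 0 (1 / 2) := by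
  rcases hg1.lt_or_gt with hlt | hgt
  · rw [← calE_neg_div_inv hg]
    exact calE_mem_Ioo_of_one_lt ((one_lt_inv₀ hg).2 hlt) _
  · exact calE_mem_Ioo_of_one_lt hgt r

end BayesError

/-- 𝓔(r,g) ∈ (0, 1/2] for all r ∈ ℝ, g > 0; and 𝓔(r,g) < 1/2 when g ≠ 1. -/
theorem calE_mem_Ioc (r g : ℝ) (hg : 0 < g) :
    (0 < calE r g ∧ calE r g ≤ 1/2) ∧ (g ≠ 1 → calE r g < 1/2) := by
  rcases eq_or_ne g 1 with rfl | hg1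
  · exact ⟨calE_one_mem_Ioc r, fun h => absurd rfl h⟩
  · exact ⟨Ioo_subset_Ioc_self (calE_mem_Ioo hg hg1 r), fun _ => (calE_mem_Ioo hg hg1 r).2⟩
end

section
/- Suppose μ₀ = μ₁. Then a nonzero α ∈ ℝ^p minimizes E over nonzero vectors if and only if it maximizes the function α ↦ max{(αᵀΣ₁α)/(αᵀΣ₀α), (αᵀΣ₀α)/(αᵀΣ₁α)} over nonzero vectors. Moreover, if among all eigenvalues of the matrices Σ₀⁻¹Σ₁ and Σ₁⁻¹Σ₀ there is a unique greatest eigenvalue λ, then any eigenvector corresponding to λ is a minimizer of E. -/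
/-!
With equal means `r = 0`, and `calE 0 g` is invariant under `g ↦ g⁻¹`. For `1 ≤ g` it equals
`1/2 - max {Φ (g x) - Φ x | 0 ≤ x}`, the maximum being attained where the densities of
`N(0, 1)` and `N(0, g⁻²)` cross; the maximum increases strictly with `g`. So `Evec μ μ S0 S1` is a
strictly decreasing function of the larger of the two variance ratios, and by the Rayleigh
principle for the pencil `(S1, S0)` the greatest values of these ratios are eigenvalues of
`S0⁻¹ * S1` and `S1⁻¹ * S0`.
-/

open MeasureTheory ProbabilityTheory Matrix Filter Set

noncomputable def Evec {p : ℕ} (μ0 μ1 : Fin p → ℝ) (S0 S1 : Matrix (Fin p) (Fin p) ℝ)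
    (α : Fin p → ℝ) : ℝ :=
  calE ((dotProduct α μ0 - dotProduct α μ1) / Real.sqrt (dotProduct α (S1.mulVec α)))
    (Real.sqrt (dotProduct α (S0.mulVec α)) / Real.sqrt (dotProduct α (S1.mulVec α)))

lemma hasDerivAt_integral_Iic {E : Type*} [NormedAddCommGroup E] [NormedSpace ℝ E]
    [CompleteSpace E] {f : ℝ → E} {t : ℝ} (hf : Integrable f) (hc : ContinuousAt f t) :
    HasDerivAt (fun s => ∫ x in Iic s, f x) (f t) t := by
  have split : (fun s => ∫ x in Iic s, f x) = fun s => (∫ x in Iic t, f x) + ∫ x in t..s, f x := by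
    funext s
    rw [← intervalIntegral.integral_Iic_sub_Iic hf.integrableOn hf.integrableOn, add_sub_cancel]
  rw [split]
  exact (intervalIntegral.integral_hasDerivAt_right hf.intervalIntegrable
    hf.aestronglyMeasurable.stronglyMeasurableAtFilter hc).const_add _

lemma measureReal_Iic_neg (μ : Measure ℝ) [IsProbabilityMeasure μ] [μ.IsNegInvariant]
    [NullSingletonClass μ] (t : ℝ) : μ.real (Iic (-t)) = 1 - μ.real (Iic t) := by
  rw [← probReal_compl_eq_one_sub measurableSet_Iic, compl_Iic, ← neg_Ici, Measure.real,
    Measure.measure_neg, ← measure_congr Ioi_ae_eq_Ici, Measure.real]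

instance isNegInvariant_gaussianReal_zero_s11 (v : NNReal) : (gaussianReal 0 v).IsNegInvariant where
  neg_eq_self := by
    simpa using! gaussianReal_map_neg (μ := 0) (v := v)

lemma Phi_eq_integral (t : ℝ) : Phi t = ∫ x in Iic t, gaussianPDFReal 0 1 x := by
  rw [Phi, gaussianReal_apply_eq_integral 0 one_ne_zero, ENNReal.toReal_ofReal]
  exact integral_nonneg fun x => gaussianPDFReal_nonneg 0 1 x

lemma Phi_neg (t : ℝ) : Phi (-t) = 1 - Phi t :=
  haveI : NullSingletonClass (gaussianReal 0 1) := nullSingletonClass_gaussianReal one_ne_zero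
  measureReal_Iic_neg (gaussianReal 0 1) t

lemma hasDerivAt_Phi_mul_sub_Phi (g x : ℝ) : HasDerivAt (fun x => Phi (g * x) - Phi x)
    (g * gaussianPDFReal 0 1 (g * x) - gaussianPDFReal 0 1 x) x := by
  have hmul : HasDerivAt (fun x => Phi (g * x)) (gaussianPDFReal 0 1 (g * x) * g) x :=
    (hasDerivAt_Phi (g * x)).comp x (hasDerivAt_const_mul g)
  rw [mul_comm g]
  exact hmul.sub (hasDerivAt_Phi x)

lemma mul_gaussianPDFReal_mul {g : ℝ} (hg : 0 < g) (x : ℝ) : g * gaussianPDFReal 0 1 (g * x) =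
    gaussianPDFReal 0 1 x * Real.exp ((Real.log (g ^ 2) - x ^ 2 * (g ^ 2 - 1)) / 2) := by
  have hexp : Real.exp ((Real.log (g ^ 2) - x ^ 2 * (g ^ 2 - 1)) / 2) =
      g * Real.exp (-(x ^ 2 * (g ^ 2 - 1)) / 2) := by
    rw [sub_eq_add_neg, add_div, Real.exp_add, Real.log_pow, Nat.cast_two,
      mul_div_cancel_left₀ _ two_ne_zero, Real.exp_log hg]
  rw [hexp, mul_left_comm]
  simp only [gaussianPDFReal]
  rw [mul_assoc _ (Real.exp _), ← Real.exp_add]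
  congr 3
  push_cast
  ring

section DensityCrossing

variable {g : ℝ}

/-- The nonnegative point where the density `x ↦ g φ (g x)` of `N(0, g⁻²)` meets the standard normal
density `φ`, for `0 < g ≠ 1`. Division by zero gives `densityCrossing 1 = 0`. -/
noncomputable def densityCrossing (g : ℝ) : ℝ := Real.sqrt (Real.log (g ^ 2) / (g ^ 2 - 1))

lemma densityCrossing_nonneg (g : ℝ) : 0 ≤ densityCrossing g := Real.sqrt_nonneg _

lemma log_sq_div_sq_sub_one_pos (hg₀ : 0 < g) (hg : g ≠ 1) :
    0 < Real.log (g ^ 2) / (g ^ 2 - 1) := by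
  rcases hg.lt_or_gt with h | h
  · have hsq : g ^ 2 < 1 := pow_lt_one₀ hg₀.le h two_ne_zero
    exact div_pos_of_neg_of_neg (Real.log_neg (pow_pos hg₀ 2) hsq) (sub_neg.2 hsq)
  · have hsq : 1 < g ^ 2 := one_lt_pow₀ h two_ne_zero
    exact div_pos (Real.log_pos hsq) (sub_pos.2 hsq)

lemma densityCrossing_pos (hg₀ : 0 < g) (hg : g ≠ 1) : 0 < densityCrossing g :=
  Real.sqrt_pos.2 (log_sq_div_sq_sub_one_pos hg₀ hg)

lemma densityCrossing_sq_mul (hg₀ : 0 < g) (hg : g ≠ 1) :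
    densityCrossing g ^ 2 * (g ^ 2 - 1) = Real.log (g ^ 2) := by
  have hsq : g ^ 2 ≠ 1 := (pow_eq_one_iff_of_nonneg hg₀.le two_ne_zero).not.2 hg
  rw [densityCrossing, Real.sq_sqrt (log_sq_div_sq_sub_one_pos hg₀ hg).le,
    div_mul_cancel₀ _ (sub_ne_zero.2 hsq)]

lemma densityCrossing_inv (hg : 0 < g) : densityCrossing g⁻¹ = g * densityCrossing g := by
  have hsub : (g⁻¹) ^ 2 - 1 = -((g ^ 2 - 1) / g ^ 2) := by
    field_simp
    ring
  rw [densityCrossing, hsub, inv_pow, Real.log_inv, neg_div_neg_eq, div_div_eq_mul_div,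
    mul_comm _ (g ^ 2), mul_div_assoc, Real.sqrt_mul (sq_nonneg g), Real.sqrt_sq hg.le,
    densityCrossing]

lemma sqrt_sub_one_mul_log (g : ℝ) :
    Real.sqrt ((g ^ 2 - 1) * Real.log (g ^ 2)) = |g ^ 2 - 1| * densityCrossing g := by
  rcases eq_or_ne (g ^ 2 - 1) 0 with h | h
  · simp [h]
  · rw [densityCrossing, ← Real.sqrt_sq_eq_abs, ← Real.sqrt_mul (sq_nonneg _)]
    congr 1
    field_simp

lemma isMaxOn_Phi_mul_sub_Phi (hg : 1 < g) :
    IsMaxOn (fun x => Phi (g * x) - Phi x) (Ici 0) (densityCrossing g) := by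
  have hd : Differentiable ℝ fun x => Phi (g * x) - Phi x :=
    fun x => (hasDerivAt_Phi_mul_sub_Phi g x).differentiableAt
  have hc : 0 ≤ g ^ 2 - 1 := sub_nonneg.2 (one_le_pow₀ hg.le)
  have hg₀ : 0 < g := one_pos.trans hg
  have hcross := densityCrossing_sq_mul hg₀ hg.ne'
  refine isMaxOn_Ici_of_deriv hd.continuous.continuousAt hd.continuous.continuousAt
    hd.differentiableOn hd.differentiableOn (fun x hx => ?_) (fun x hx => ?_)
  · have hsq : x ^ 2 ≤ densityCrossing g ^ 2 := pow_le_pow_left₀ hx.1.le hx.2.le 2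
    have hlog := (mul_le_mul_of_nonneg_right hsq hc).trans_eq hcross
    rw [(hasDerivAt_Phi_mul_sub_Phi g x).deriv, mul_gaussianPDFReal_mul hg₀, sub_nonneg]
    exact le_mul_of_one_le_right (gaussianPDFReal_nonneg 0 1 x) (Real.one_le_exp (by linarith))
  · have hsq : densityCrossing g ^ 2 ≤ x ^ 2 :=
      pow_le_pow_left₀ (densityCrossing_nonneg g) (le_of_lt hx) 2
    have hlog := hcross.symm.trans_le (mul_le_mul_of_nonneg_right hsq hc)
    rw [(hasDerivAt_Phi_mul_sub_Phi g x).deriv, mul_gaussianPDFReal_mul hg₀, sub_nonpos]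
    exact mul_le_of_le_one_right (gaussianPDFReal_nonneg 0 1 x)
      (Real.exp_le_one_iff.2 (by linarith))

end DensityCrossing

lemma one_le_max_inv {K : Type*} [Field K] [LinearOrder K] [IsStrictOrderedRing K] {a : K}
    (ha : 0 < a) : 1 ≤ max a⁻¹ a :=
  (le_total a 1).elim (fun h => le_max_of_le_left ((one_le_inv₀ ha).2 h)) le_max_of_le_right

lemma sqrt_max_inv (q : ℝ) : max (Real.sqrt q)⁻¹ (Real.sqrt q) = Real.sqrt (max q⁻¹ q) := by
  rw [Real.sqrt_monotone.map_max, Real.sqrt_inv]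

section CenteredError

variable {g : ℝ}

lemma calE_zero_one : calE 0 1 = 1 / 2 := by
  simp [calE, Phi_zero]

lemma calE_zero_of_ne_one (hg : g ≠ 1) : calE 0 g = 1 / 2
    + Phi (Real.sqrt ((g ^ 2 - 1) * Real.log (g ^ 2)) / (g ^ 2 - 1))
    - Phi (g * (Real.sqrt ((g ^ 2 - 1) * Real.log (g ^ 2)) / (g ^ 2 - 1))) := by
  rw [calE, if_neg hg]
  simp only [zero_mul, zero_add, zero_sub, zero_pow two_ne_zero, neg_div, Phi_neg, mul_div_assoc]
  ring

lemma calE_zero_of_one_lt (hg : 1 < g) :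
    calE 0 g = 1 / 2 - (Phi (g * densityCrossing g) - Phi (densityCrossing g)) := by
  have hsq : 0 < g ^ 2 - 1 := sub_pos.2 (one_lt_pow₀ hg two_ne_zero)
  rw [calE_zero_of_ne_one hg.ne', sqrt_sub_one_mul_log, abs_of_pos hsq,
    mul_div_cancel_left₀ _ hsq.ne']
  ring

lemma calE_zero_of_lt_one (hg₀ : 0 < g) (hg : g < 1) :
    calE 0 g = 1 / 2 - (Phi (densityCrossing g) - Phi (g * densityCrossing g)) := by
  have hsq : g ^ 2 - 1 < 0 := sub_neg.2 (pow_lt_one₀ hg₀.le hg two_ne_zero)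
  rw [calE_zero_of_ne_one hg.ne, sqrt_sub_one_mul_log, abs_of_neg hsq, neg_mul, neg_div,
    mul_div_cancel_left₀ _ hsq.ne, mul_neg, Phi_neg, Phi_neg]
  ring

lemma calE_zero_inv_of_one_lt (hg : 1 < g) : calE 0 g⁻¹ = calE 0 g := by
  have hg₀ : 0 < g := one_pos.trans hg
  rw [calE_zero_of_lt_one (inv_pos.2 hg₀) (inv_lt_one_of_one_lt₀ hg), densityCrossing_inv hg₀,
    inv_mul_cancel_left₀ hg₀.ne', calE_zero_of_one_lt hg]

lemma calE_zero_max_inv (hg : 0 < g) : calE 0 (max g⁻¹ g) = calE 0 g := by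
  rcases lt_or_ge g 1 with h | h
  · have hinv : 1 < g⁻¹ := (one_lt_inv₀ hg).2 h
    rw [max_eq_left (h.trans hinv).le, ← calE_zero_inv_of_one_lt hinv, inv_inv]
  · rw [max_eq_right ((inv_le_one_of_one_le₀ h).trans h)]

lemma strictAntiOn_calE_zero : StrictAntiOn (calE 0) (Ici 1) := by
  intro g (hg : 1 ≤ g) k _ hgk
  have hk : 1 < k := hg.trans_lt hgk
  rw [calE_zero_of_one_lt hk]
  rcases hg.eq_or_lt with rfl | hg
  · have hcross : 0 < densityCrossing k := densityCrossing_pos (one_pos.trans hk) hk.ne'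
    have hlt := strictMono_Phi (lt_mul_of_one_lt_left hcross hk)
    rw [calE_zero_one]
    linarith
  · have hcross : 0 < densityCrossing g := densityCrossing_pos (one_pos.trans hg) hg.ne'
    have hlt := strictMono_Phi (mul_lt_mul_of_pos_right hgk hcross)
    rw [calE_zero_of_one_lt hg]
    exact sub_lt_sub_left ((sub_lt_sub_right hlt _).trans_le
      (isMaxOn_Phi_mul_sub_Phi hk hcross.le)) _

lemma calE_zero_le_calE_zero_iff {k : ℝ} (hg : 0 < g) (hk : 0 < k) :
    calE 0 g ≤ calE 0 k ↔ max k⁻¹ k ≤ max g⁻¹ g := by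
  rw [← calE_zero_max_inv hg, ← calE_zero_max_inv hk,
    strictAntiOn_calE_zero.le_iff_ge (one_le_max_inv hg) (one_le_max_inv hk)]

lemma calE_zero_sqrt_le_calE_zero_sqrt_iff {q r : ℝ} (hq : 0 < q) (hr : 0 < r) :
    calE 0 (Real.sqrt q) ≤ calE 0 (Real.sqrt r) ↔ max r⁻¹ r ≤ max q⁻¹ q := by
  rw [calE_zero_le_calE_zero_iff (Real.sqrt_pos.2 hq) (Real.sqrt_pos.2 hr), sqrt_max_inv,
    sqrt_max_inv, Real.sqrt_le_sqrt_iff (lt_max_of_lt_right hq).le]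

end CenteredError

section RayleighRatio

variable {n : Type*} [Fintype n] {A B : Matrix n n ℝ} {x : n → ℝ}

/-- The generalized Rayleigh quotient of the pencil `(A, B)`; for covariance matrices, the ratio of
the variances along `x`. -/
noncomputable def rayleighRatio (A B : Matrix n n ℝ) (x : n → ℝ) : ℝ :=
  (x ⬝ᵥ A *ᵥ x) / (x ⬝ᵥ B *ᵥ x)

lemma dotProduct_mulVec_pos_of_posDef (hA : A.PosDef) (hx : x ≠ 0) : 0 < x ⬝ᵥ A *ᵥ x := by
  simpa using hA.dotProduct_mulVec_pos hx

lemma rayleighRatio_pos (hA : A.PosDef) (hB : B.PosDef) (hx : x ≠ 0) : 0 < rayleighRatio A B x :=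
  div_pos (dotProduct_mulVec_pos_of_posDef hA hx) (dotProduct_mulVec_pos_of_posDef hB hx)

lemma inv_rayleighRatio (A B : Matrix n n ℝ) (x : n → ℝ) :
    (rayleighRatio A B x)⁻¹ = rayleighRatio B A x :=
  inv_div _ _

lemma rayleighRatio_smul (A B : Matrix n n ℝ) {c : ℝ} (hc : c ≠ 0) (x : n → ℝ) :
    rayleighRatio A B (c • x) = rayleighRatio A B x := by
  simp only [rayleighRatio, mulVec_smul, smul_dotProduct, dotProduct_smul, smul_eq_mul]
  rw [mul_div_mul_left _ _ hc, mul_div_mul_left _ _ hc]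

lemma rayleighRatio_eq_of_mulVec_eq_smul (hB : B.PosDef) (hx : x ≠ 0) {c : ℝ}
    (h : A *ᵥ x = c • B *ᵥ x) : rayleighRatio A B x = c := by
  rw [rayleighRatio, h, dotProduct_smul, smul_eq_mul,
    mul_div_cancel_right₀ _ (dotProduct_mulVec_pos_of_posDef hB hx).ne']

lemma exists_isMaxOn_rayleighRatio [Nonempty n] (A : Matrix n n ℝ) (hB : B.PosDef) :
    ∃ u, u ≠ 0 ∧ IsMaxOn (rayleighRatio A B) {0}ᶜ u := by
  have sphere_ne_zero : ∀ x ∈ Metric.sphere (0 : n → ℝ) 1, x ≠ 0 :=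
    fun x hx => ne_zero_of_mem_unit_sphere ⟨x, hx⟩
  have hcont : ContinuousOn (rayleighRatio A B) (Metric.sphere 0 1) :=
    ContinuousOn.div (by fun_prop) (by fun_prop) fun x hx =>
      (dotProduct_mulVec_pos_of_posDef hB (sphere_ne_zero x hx)).ne'
  obtain ⟨u, hu, hmax⟩ := (isCompact_sphere (0 : n → ℝ) 1).exists_isMaxOn
    (NormedSpace.sphere_nonempty.2 zero_le_one) hcont
  refine ⟨u, sphere_ne_zero u hu, fun x hx => ?_⟩
  have hnorm : ‖x‖ ≠ 0 := norm_ne_zero_iff.2 hx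
  have hunit : ‖x‖⁻¹ • x ∈ Metric.sphere (0 : n → ℝ) 1 := by
    simp [norm_smul, hnorm]
  exact (rayleighRatio_smul A B (inv_ne_zero hnorm) x).symm.trans_le (hmax hunit)

lemma mulVec_eq_smul_of_isMaxOn_rayleighRatio (hA : A.IsHermitian) (hB : B.PosDef) (hx : x ≠ 0)
    (hmax : IsMaxOn (rayleighRatio A B) {0}ᶜ x) : A *ᵥ x = rayleighRatio A B x • B *ᵥ x := by
  -- The form `L • B - A` is positive semidefinite and vanishes at `x`, so `x` lies in its kernel.
  set L := rayleighRatio A B x with hL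
  have form_eq (y : n → ℝ) : y ⬝ᵥ (L • B - A) *ᵥ y = L * (y ⬝ᵥ B *ᵥ y) - y ⬝ᵥ A *ᵥ y := by
    simp [sub_mulVec, smul_mulVec, dotProduct_sub]
  have hpsd : (L • B - A).PosSemidef := by
    refine .of_dotProduct_mulVec_nonneg ((hB.1.smul (IsSelfAdjoint.all L)).sub hA) fun y => ?_
    rw [star_trivial, form_eq, sub_nonneg]
    rcases eq_or_ne y 0 with rfl | hy
    · simp
    · exact (div_le_iff₀ (dotProduct_mulVec_pos_of_posDef hB hy)).1 (hmax hy)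
  have hker : (L • B - A) *ᵥ x = 0 := by
    rw [← hpsd.dotProduct_mulVec_zero_iff, star_trivial, form_eq, hL, rayleighRatio,
      div_mul_cancel₀ _ (dotProduct_mulVec_pos_of_posDef hB hx).ne', sub_self]
  rw [sub_mulVec, smul_mulVec, sub_eq_zero] at hker
  exact hker.symm

variable [DecidableEq n]

lemma inv_mul_mulVec_eq_smul_iff {R : Type*} [CommRing R] {A B : Matrix n n R} (hB : IsUnit B)
    {c : R} {x : n → R} : (B⁻¹ * A) *ᵥ x = c • x ↔ A *ᵥ x = c • B *ᵥ x := by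
  have hdet : IsUnit B.det := (isUnit_iff_isUnit_det B).1 hB
  constructor
  · intro h
    rw [← mulVec_smul, ← h, mulVec_mulVec, mul_nonsing_inv_cancel_left _ _ hdet]
  · intro h
    rw [← mulVec_mulVec, h, mulVec_smul, mulVec_mulVec, nonsing_inv_mul _ hdet, one_mulVec]

lemma rayleighRatio_eq_of_eigenvector (hB : B.PosDef) (hx : x ≠ 0) {c : ℝ}
    (h : (B⁻¹ * A) *ᵥ x = c • x) : rayleighRatio A B x = c :=
  rayleighRatio_eq_of_mulVec_eq_smul hB hx ((inv_mul_mulVec_eq_smul_iff hB.isUnit).1 h)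

lemma rayleighRatio_le_of_forall_eigenvalue_le (hA : A.IsHermitian) (hB : B.PosDef) {c : ℝ}
    (hc : ∀ ν : ℝ, ∀ v, v ≠ 0 → (B⁻¹ * A) *ᵥ v = ν • v → ν ≤ c) (hx : x ≠ 0) :
    rayleighRatio A B x ≤ c := by
  obtain ⟨i, -⟩ := Function.ne_iff.1 hx
  have : Nonempty n := ⟨i⟩
  obtain ⟨u, hu, hmax⟩ := exists_isMaxOn_rayleighRatio A hB
  have hpencil := mulVec_eq_smul_of_isMaxOn_rayleighRatio hA hB hu hmax
  exact (hmax hx).trans (hc _ u hu ((inv_mul_mulVec_eq_smul_iff hB.isUnit).2 hpencil))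

end RayleighRatio

section EqualMeans

variable {p : ℕ} {S0 S1 : Matrix (Fin p) (Fin p) ℝ}

lemma Evec_self_eq_calE (μ : Fin p → ℝ) (h1 : S1.PosSemidef) (α : Fin p → ℝ) :
    Evec μ μ S0 S1 α = calE 0 (Real.sqrt (rayleighRatio S0 S1 α)) := by
  have hnonneg : 0 ≤ α ⬝ᵥ S1 *ᵥ α := by simpa using h1.dotProduct_mulVec_nonneg α
  rw [Evec, sub_self, zero_div, rayleighRatio, Real.sqrt_div' _ hnonneg]

lemma Evec_self_le_iff (μ : Fin p → ℝ) (h0 : S0.PosDef) (h1 : S1.PosDef) {α γ : Fin p → ℝ}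
    (hα : α ≠ 0) (hγ : γ ≠ 0) :
    Evec μ μ S0 S1 α ≤ Evec μ μ S0 S1 γ ↔
      max (rayleighRatio S1 S0 γ) (rayleighRatio S0 S1 γ) ≤
        max (rayleighRatio S1 S0 α) (rayleighRatio S0 S1 α) := by
  rw [Evec_self_eq_calE μ h1.posSemidef, Evec_self_eq_calE μ h1.posSemidef,
    calE_zero_sqrt_le_calE_zero_sqrt_iff (rayleighRatio_pos h0 h1 hα) (rayleighRatio_pos h0 h1 hγ),
    inv_rayleighRatio, inv_rayleighRatio]

end EqualMeans

/-- Equal-means case: minimizers of E are exactly the maximizers of the variance-ratio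
criterion; and if there is a unique greatest eigenvalue among those of Σ₀⁻¹Σ₁ and
Σ₁⁻¹Σ₀, then any corresponding eigenvector is a minimizer of E. -/
theorem Evec_equal_mean {p : ℕ} (hp : 1 ≤ p) (μ0 μ1 : Fin p → ℝ)
    (S0 S1 : Matrix (Fin p) (Fin p) ℝ) (h0 : S0.PosDef) (h1 : S1.PosDef)
    (hμ : μ0 = μ1) :
    (∀ α : Fin p → ℝ, α ≠ 0 →
        ((∀ γ : Fin p → ℝ, γ ≠ 0 → Evec μ0 μ1 S0 S1 α ≤ Evec μ0 μ1 S0 S1 γ) ↔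
          (∀ γ : Fin p → ℝ, γ ≠ 0 →
            max (dotProduct γ (S1.mulVec γ) / dotProduct γ (S0.mulVec γ))
                (dotProduct γ (S0.mulVec γ) / dotProduct γ (S1.mulVec γ)) ≤
            max (dotProduct α (S1.mulVec α) / dotProduct α (S0.mulVec α))
                (dotProduct α (S0.mulVec α) / dotProduct α (S1.mulVec α))))) ∧
    ∀ lam : ℝ,
      (∃ v : Fin p → ℝ, v ≠ 0 ∧
          ((S0⁻¹ * S1).mulVec v = lam • v ∨ (S1⁻¹ * S0).mulVec v = lam • v)) →
      (∀ ν : ℝ, (∃ v : Fin p → ℝ, v ≠ 0 ∧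
          ((S0⁻¹ * S1).mulVec v = ν • v ∨ (S1⁻¹ * S0).mulVec v = ν • v)) →
        ν ≠ lam → ν < lam) →
      ∀ v : Fin p → ℝ, v ≠ 0 →
        ((S0⁻¹ * S1).mulVec v = lam • v ∨ (S1⁻¹ * S0).mulVec v = lam • v) →
        ∀ γ : Fin p → ℝ, γ ≠ 0 → Evec μ0 μ1 S0 S1 v ≤ Evec μ0 μ1 S0 S1 γ := by
  subst hμ
  refine ⟨fun α hα => forall₂_congr fun γ hγ => Evec_self_le_iff μ0 h0 h1 hα hγ,
    fun lam _ hgreatest v hv hev γ hγ => (Evec_self_le_iff μ0 h0 h1 hv hγ).2 ?_⟩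
  have eigenvalue_le (ν : ℝ) (u : Fin p → ℝ) (hu : u ≠ 0)
      (h : (S0⁻¹ * S1) *ᵥ u = ν • u ∨ (S1⁻¹ * S0) *ᵥ u = ν • u) : ν ≤ lam :=
    (eq_or_ne ν lam).elim le_of_eq fun hne => (hgreatest ν ⟨u, hu, h⟩ hne).le
  calc max (rayleighRatio S1 S0 γ) (rayleighRatio S0 S1 γ)
      ≤ lam := max_le
        (rayleighRatio_le_of_forall_eigenvalue_le h1.1 h0
          (fun ν u hu h => eigenvalue_le ν u hu (.inl h)) hγ)
        (rayleighRatio_le_of_forall_eigenvalue_le h0.1 h1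
          (fun ν u hu h => eigenvalue_le ν u hu (.inr h)) hγ)
    _ ≤ max (rayleighRatio S1 S0 v) (rayleighRatio S0 S1 v) := hev.elim
        (fun h => le_max_of_le_left (rayleighRatio_eq_of_eigenvector h0 hv h).ge)
        (fun h => le_max_of_le_right (rayleighRatio_eq_of_eigenvector h1 hv h).ge)
end
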